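/- For every N ≥ 1, all r, s, q ∈ ℂ and all u, v ∈ ℂ^N, one has Σ_{α,β ∈ BC_N⁺} c_α c_β (α(u)β(v) − α(v)β(u))² = 2h² · Σ_{1≤i<j≤N} (u_i v_j − u_j v_i)², where the sum is over all ordered pairs (α,β) of covectors of BC_N⁺(r,s,q) and h = r + 4s + 2q(N−1). -/

import Mathlib

open Finset

noncomputable section

/-- Evaluation of a covector `α` on a vector `x` in `ℂ^N`. -/
def ev {N : ℕ} (α x : Fin N → ℂ) : ℂ := ∑ i, α i * x i

/-- `(α ∧ β)(a, b) = α(a)β(b) - α(b)β(a)`. -/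
def wedge {N : ℕ} (α β a b : Fin N → ℂ) : ℂ :=
  ev α a * ev β b - ev α b * ev β a

/-- The standard covector `e^i` of `(ℂ^N)^*`. -/
def esgl (N : ℕ) (i : Fin N) : Fin N → ℂ := Pi.single i 1

/-- The weighted sum `Σ_{α ∈ BC_N⁺} c_α f(α)` over the configuration `BC_N⁺(r,s,q)`,
whose covectors are `e^i` (weight `r`), `2e^i` (weight `s`) and `e^i ± e^j`, `i < j`
(weight `q`). -/
def bcSum (N : ℕ) (r s q : ℂ) (f : (Fin N → ℂ) → ℂ) : ℂ :=
  (∑ i, r * f (esgl N i)) + (∑ i, s * f ((2 : ℂ) • esgl N i)) +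
    ∑ p ∈ Finset.univ.filter (fun p : Fin N × Fin N => p.1 < p.2),
      (q * f (esgl N p.1 + esgl N p.2) + q * f (esgl N p.1 - esgl N p.2))

/-! By the parallelogram law, summing a quadratic form `Q` over `BC_N⁺(r,s,q)` gives
`h * ∑ i, Q (e^i)`: up to the factor `h`, the configuration acts on quadratic forms like an
orthonormal basis. As `((α ∧ β)(u, v))²` is quadratic in `α` and in `β`, applying this twice
leaves `h² ∑ i, ∑ j, ((e^i ∧ e^j)(u, v))²`, in which each pair `i < j` occurs twice. -/

section SumLt

variable {ι M : Type*} [Fintype ι] [LinearOrder ι] [LocallyFiniteOrderTop ι]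
  [LocallyFiniteOrderBot ι] [AddCommMonoid M]

lemma sum_lt_add_swap_add_sum_diag (F : ι → ι → M) :
    (∑ p : ι × ι with p.1 < p.2, (F p.1 p.2 + F p.2 p.1)) + ∑ i, F i i = ∑ i, ∑ j, F i j := by
  have sum_lt_eq_sum_compl :
      ∑ p : ι × ι with p.1 < p.2, (F p.1 p.2 + F p.2 p.1) = ∑ i, ∑ j ∈ {i}ᶜ, F i j := by
    rw [← sum_sum_Ioi_add_eq_sum_sum_off_diag fun j i => F i j, sum_filter, Fintype.sum_prod_type]
    simp only [← sum_filter, filter_lt_eq_Ioi]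
  rw [sum_lt_eq_sum_compl, ← sum_add_distrib]
  refine sum_congr rfl fun i _ => ?_
  rw [← sum_compl_add_sum {i}, sum_singleton]

lemma sum_lt_add_add_sum_eq_card_nsmul (f : ι → M) :
    (∑ p : ι × ι with p.1 < p.2, (f p.1 + f p.2)) + ∑ i, f i = Fintype.card ι • ∑ i, f i := by
  rw [sum_lt_add_swap_add_sum_diag fun i _ => f i, sum_comm, sum_const, card_univ]

lemma sum_sum_eq_two_nsmul_sum_lt {F : ι → ι → M} (symm : ∀ i j, F i j = F j i)
    (diag : ∀ i, F i i = 0) :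
    ∑ i, ∑ j, F i j = 2 • ∑ p : ι × ι with p.1 < p.2, F p.1 p.2 := by
  rw [← sum_lt_add_swap_add_sum_diag F, sum_eq_zero fun i _ => diag i, add_zero, ← sum_nsmul]
  exact sum_congr rfl fun p _ => by rw [symm p.2, two_nsmul]

end SumLt

lemma quadraticMap_map_add_add_map_sub {R M P : Type*} [CommRing R] [AddCommGroup M]
    [AddCommGroup P] [Module R M] [Module R P] (Q : QuadraticMap R M P) (x y : M) :
    Q (x + y) + Q (x - y) = 2 • (Q x + Q y) := by
  rw [sub_eq_add_neg, QuadraticMap.map_add Q, QuadraticMap.map_add Q, Q.map_neg,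
    Q.polar_neg_right]
  abel

section Configuration

variable {N : ℕ}

lemma ev_eq_dotProduct (α x : Fin N → ℂ) : ev α x = α ⬝ᵥ x := rfl

lemma ev_esgl (i : Fin N) (x : Fin N → ℂ) : ev (esgl N i) x = x i :=
  single_one_dotProduct i x

/-- `wedge` as a bilinear form in its two covectors, for fixed vectors `u` and `v`. -/
def wedgeBilin (u v : Fin N → ℂ) : LinearMap.BilinForm ℂ (Fin N → ℂ) :=
  LinearMap.mk₂ ℂ (fun α β => wedge α β u v)
    (fun α α' β => by simp only [wedge, ev_eq_dotProduct, add_dotProduct]; ring)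
    (fun c α β => by simp only [wedge, ev_eq_dotProduct, smul_dotProduct, smul_eq_mul]; ring)
    (fun α β β' => by simp only [wedge, ev_eq_dotProduct, add_dotProduct]; ring)
    (fun c α β => by simp only [wedge, ev_eq_dotProduct, smul_dotProduct, smul_eq_mul]; ring)

lemma wedgeBilin_apply (u v α β : Fin N → ℂ) : wedgeBilin u v α β = wedge α β u v := rfl

lemma wedge_esgl (u v : Fin N → ℂ) (i j : Fin N) :
    wedge (esgl N i) (esgl N j) u v = u i * v j - u j * v i := by
  simp only [wedge, ev_esgl, mul_comm (v i)]

lemma bcSum_quadraticForm (r s q : ℂ) (Q : QuadraticForm ℂ (Fin N → ℂ)) :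
    bcSum N r s q Q = (r + 4 * s + 2 * q * ((N : ℂ) - 1)) * ∑ i, Q (esgl N i) := by
  have sum_double : ∑ i, s * Q ((2 : ℂ) • esgl N i) = 4 * s * ∑ i, Q (esgl N i) := by
    rw [mul_sum]
    refine sum_congr rfl fun i _ => ?_
    rw [Q.map_smul, smul_eq_mul]
    ring
  have sum_add_and_sub : ∑ p : Fin N × Fin N with p.1 < p.2,
      (q * Q (esgl N p.1 + esgl N p.2) + q * Q (esgl N p.1 - esgl N p.2)) =
        2 * q * ∑ p : Fin N × Fin N with p.1 < p.2, (Q (esgl N p.1) + Q (esgl N p.2)) := by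
    rw [mul_sum]
    refine sum_congr rfl fun p _ => ?_
    rw [← mul_add, quadraticMap_map_add_add_map_sub, nsmul_eq_mul]
    push_cast
    ring
  have sum_pairs := sum_lt_add_add_sum_eq_card_nsmul fun i => Q (esgl N i)
  rw [Fintype.card_fin, nsmul_eq_mul] at sum_pairs
  rw [bcSum, ← mul_sum, sum_double, sum_add_and_sub]
  linear_combination 2 * q * sum_pairs

lemma bcSum_bcSum_bilinForm_sq (r s q : ℂ) (B : LinearMap.BilinForm ℂ (Fin N → ℂ)) :
    bcSum N r s q (fun α => bcSum N r s q (fun β => B α β ^ 2)) =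
      (r + 4 * s + 2 * q * ((N : ℂ) - 1)) ^ 2 *
        ∑ i, ∑ j, B (esgl N i) (esgl N j) ^ 2 := by
  let sqForm (φ : (Fin N → ℂ) →ₗ[ℂ] ℂ) : QuadraticForm ℂ (Fin N → ℂ) := QuadraticMap.sq.comp φ
  have sqForm_eq (φ : (Fin N → ℂ) →ₗ[ℂ] ℂ) : ⇑(sqForm φ) = fun α => φ α ^ 2 :=
    funext fun α => (sq (φ α)).symm
  set h := r + 4 * s + 2 * q * ((N : ℂ) - 1) with h_def
  have inner_sum (α : Fin N → ℂ) :
      bcSum N r s q (fun β => B α β ^ 2) = (h • ∑ j, sqForm (B.flip (esgl N j))) α := by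
    rw [← sqForm_eq, bcSum_quadraticForm, smul_apply, _root_.sum_apply]
    simp only [sqForm_eq, LinearMap.BilinForm.flip_apply, smul_eq_mul, h_def]
  simp only [inner_sum]
  rw [bcSum_quadraticForm, ← h_def]
  simp only [smul_apply, _root_.sum_apply, sqForm_eq, LinearMap.BilinForm.flip_apply, smul_eq_mul,
    ← mul_sum]
  ring

end Configuration

/-- the form `G^{(1)}` of the configuration `BC_N⁺(r,s,q)` equals
`2h² Σ_{i<j} (e^i ∧ e^j)²` with `h = r + 4s + 2q(N-1)`. -/
theorem BC_G1_identity (N : ℕ) (hN : 1 ≤ N) (r s q : ℂ) (u v : Fin N → ℂ) :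
    bcSum N r s q (fun α => bcSum N r s q (fun β => wedge α β u v ^ 2)) =
    2 * (r + 4 * s + 2 * q * ((N : ℂ) - 1)) ^ 2 *
      ∑ p ∈ Finset.univ.filter (fun p : Fin N × Fin N => p.1 < p.2),
        (u p.1 * v p.2 - u p.2 * v p.1) ^ 2 := by
  have sum_minors := sum_sum_eq_two_nsmul_sum_lt
    (F := fun i j => (u i * v j - u j * v i) ^ 2) (fun i j => by ring) (fun i => by ring)
  have sum_sq_wedge := bcSum_bcSum_bilinForm_sq r s q (wedgeBilin u v)
  simp only [wedgeBilin_apply, wedge_esgl] at sum_sq_wedge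
  rw [sum_sq_wedge, sum_minors, nsmul_eq_mul]
  push_cast
  ring

end
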